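/- Let X be a real Banach space and let c ≥ 1. Then X has the c-strong Schur property if and only if wca(x_n) ≤ c·de(x_n) for every bounded sequence (x_n) in X. -/

import Mathlib

open scoped BigOperators
open Filter

/-- `ca` of a real sequence: `inf_n sup {|t_k - t_l| : k, l ≥ n}`. -/
noncomputable def caSeqR (t : ℕ → ℝ) : ℝ :=
  sInf {s | ∃ n : ℕ, s = sSup {u | ∃ k, n ≤ k ∧ ∃ l, n ≤ l ∧ u = |t k - t l|}}

/-- `ca` of a sequence in a normed space: `inf_n diam {x_k : k ≥ n}`. -/
noncomputable def caSeq {X : Type*} [NormedAddCommGroup X] (x : ℕ → X) : ℝ :=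
  sInf {s | ∃ n : ℕ, s = Metric.diam (x '' Set.Ici n)}

/-- `de` of a sequence: `sup {ca((x*(x_n))_n) : x* ∈ B_{X*}}`. -/
noncomputable def deSeq {X : Type*} [NormedAddCommGroup X] [NormedSpace ℝ X]
    (x : ℕ → X) : ℝ :=
  sSup {t | ∃ φ : X →L[ℝ] ℝ, ‖φ‖ ≤ 1 ∧ t = caSeqR fun n => φ (x n)}

/-- `wca(x_n) = inf {ca((x_{n_k})_k) : (n_k) strictly increasing}`. -/
noncomputable def wcaSeq {X : Type*} [NormedAddCommGroup X] (x : ℕ → X) : ℝ :=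
  sInf {t | ∃ n : ℕ → ℕ, StrictMono n ∧ t = caSeq (x ∘ n)}

/-- `wde(x_n) = inf {de((x_{n_k})_k) : (n_k) strictly increasing}`. -/
noncomputable def wdeSeq {X : Type*} [NormedAddCommGroup X] [NormedSpace ℝ X]
    (x : ℕ → X) : ℝ :=
  sInf {t | ∃ n : ℕ → ℕ, StrictMono n ∧ t = deSeq (x ∘ n)}

/-- A real normed space is `c`-Schur if `ca(x_n) ≤ c · de(x_n)` for every bounded
sequence `(x_n)`. -/
def IsCSchur (X : Type*) [NormedAddCommGroup X] [NormedSpace ℝ X] (c : ℝ) : Prop :=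
  ∀ x : ℕ → X, (∃ C : ℝ, ∀ n, ‖x n‖ ≤ C) → caSeq x ≤ c * deSeq x

/-- A real normed space has the `c`-strong Schur property if every normalized
`δ`-separated sequence admits a subsequence `(2c/δ + ε)`-equivalent to the unit
vector basis of `ℓ¹`. -/
def HasCStrongSchur (X : Type*) [NormedAddCommGroup X] [NormedSpace ℝ X] (c : ℝ) : Prop :=
  ∀ δ : ℝ, 0 < δ → δ ≤ 2 → ∀ ε : ℝ, 0 < ε → ∀ x : ℕ → X,
    (∀ n, ‖x n‖ = 1) → (∀ n m, n ≠ m → δ ≤ ‖x n - x m‖) →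
    ∃ n : ℕ → ℕ, StrictMono n ∧ ∀ (N : ℕ) (a : ℕ → ℝ),
      (2 * c / δ + ε)⁻¹ * ∑ k ∈ Finset.range N, |a k| ≤
        ‖∑ k ∈ Finset.range N, a k • x (n k)‖

set_option linter.unusedSectionVars false
lemma exists_seq_aux {α : Type*} (P : α → Prop) (r : α → α → Prop) (a : α) (ha : P a)
    (h : ∀ a, P a → ∃ b, P b ∧ r a b) :
    ∃ f : ℕ → α, f 0 = a ∧ ∀ n, P (f n) ∧ r (f n) (f (n+1)) := by
  choose g hg1 hg2 using h
  let F : ℕ → {a // P a} := fun n => Nat.rec ⟨a, ha⟩ (fun _ s => ⟨g s.1 s.2, hg1 s.1 s.2⟩) n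
  exact ⟨fun n => (F n).1, rfl, fun n => ⟨(F n).2, hg2 _ (F n).2⟩⟩

def RConv {S : Type*} (E : Bool → ℕ → Set S) (D : Set S) (M : Set ℕ) : Prop :=
  ∀ φ ∈ D, ∃ b, {n | n ∈ M ∧ φ ∈ E b n}.Finite

def RNC {S : Type*} (E : Bool → ℕ → Set S) (D : Set S) (M : Set ℕ) : Prop :=
  ∀ N, N ⊆ M → N.Infinite → ¬ RConv E D N

lemma inf_inter_Ioi {M : Set ℕ} (hM : M.Infinite) (j : ℕ) : (M ∩ Set.Ioi j).Infinite := by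
  intro hf
  apply hM
  refine (hf.union (Set.finite_Iic j)).subset ?_
  intro n hn
  by_cases h : n ≤ j
  · exact Or.inr h
  · exact Or.inl ⟨hn, not_le.1 h⟩

lemma rosenthal_step {S : Type*} (E : Bool → ℕ → Set S) (F : Set (Set S)) (hF : F.Finite)
    (M : Set ℕ) (hM : M.Infinite) (hNC : ∀ D ∈ F, RNC E D M) :
    ∃ j ∈ M, ∃ N ⊆ M, N.Infinite ∧ (∀ n ∈ N, j < n) ∧ ∀ D ∈ F, ∀ b, RNC E (D ∩ E b j) N := by
  by_contra hcon
  have h : ∀ j ∈ M, ∀ N ⊆ M, N.Infinite → (∀ n ∈ N, j < n) →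
      ∃ N' ⊆ N, N'.Infinite ∧ ∃ D ∈ F, ∃ b, RConv E (D ∩ E b j) N' := by
    intro j hj N hN hNi hlt
    by_contra hc
    apply hcon
    refine ⟨j, hj, N, hN, hNi, hlt, ?_⟩
    intro D hD b N' hN' hN'i hconv
    exact hc ⟨N', hN', hN'i, D, hD, b, hconv⟩
  let P : ℕ × Set ℕ → Prop := fun s => s.1 ∈ M ∧ s.2 ⊆ M ∧ s.2.Infinite ∧ (∀ n ∈ s.2, s.1 < n) ∧
    ∃ D ∈ F, ∃ b, RConv E (D ∩ E b s.1) s.2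
  let r : ℕ × Set ℕ → ℕ × Set ℕ → Prop := fun s t => t.1 ∈ s.2 ∧ t.2 ⊆ s.2
  have key : ∀ N ⊆ M, N.Infinite → ∃ t, P t ∧ t.1 ∈ N ∧ t.2 ⊆ N := by
    intro N hN hNi
    obtain ⟨j, hj⟩ := hNi.nonempty
    obtain ⟨N', hN', hN'i, D, hD, b, hc⟩ := h j (hN hj) (N ∩ Set.Ioi j)
      (Set.inter_subset_left.trans hN) (inf_inter_Ioi hNi j) (fun n hn => hn.2)
    exact ⟨(j, N'), ⟨hN hj, (hN'.trans Set.inter_subset_left).trans hN, hN'i,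
      fun n hn => (hN' hn).2, D, hD, b, hc⟩, hj, hN'.trans Set.inter_subset_left⟩
  obtain ⟨a, ha, -⟩ := key M subset_rfl hM
  obtain ⟨f, -, hf⟩ := exists_seq_aux P r a ha (fun s hs => key s.2 hs.2.1 hs.2.2.1)
  have hr : ∀ k l, k < l → r (f k) (f l) := by
    intro k l hkl
    induction hkl with
    | refl => exact (hf k).2
    | step _ ih => exact ⟨ih.2 (hf _).2.1, (hf _).2.2.trans ih.2⟩
  have hmono : StrictMono (fun k => (f k).1) := fun k l hkl =>
    (hf k).1.2.2.2.1 _ (hr k l hkl).1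
  have hD : ∀ k, ∃ y : F × Bool, RConv E (y.1.1 ∩ E y.2 (f k).1) (f k).2 := by
    intro k
    obtain ⟨D, hD, b, hc⟩ := (hf k).1.2.2.2.2
    exact ⟨(⟨D, hD⟩, b), hc⟩
  choose g hg using hD
  have : Finite F := hF.to_subtype
  obtain ⟨y, hy⟩ := Finite.exists_infinite_fiber g
  have hJ : (g ⁻¹' {y}).Infinite := Set.infinite_coe_iff.1 hy
  refine hNC y.1.1 y.1.2 ((fun k => (f k).1) '' (g ⁻¹' {y})) ?_
    (hJ.image hmono.injective.injOn) ?_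
  · rintro _ ⟨k, -, rfl⟩
    exact (hf k).1.1
  · intro φ hφ
    by_cases hex : ∃ k, g k = y ∧ φ ∈ E y.2 (f k).1
    · obtain ⟨k, hk, hφk⟩ := hex
      have h1 := hg k
      rw [hk] at h1
      obtain ⟨b, hb⟩ := h1 φ ⟨hφ, hφk⟩
      refine ⟨b, (hb.union ((Set.finite_Iic k).image (fun k => (f k).1))).subset ?_⟩
      rintro _ ⟨⟨i, -, rfl⟩, hi⟩
      rcases lt_or_ge k i with hki | hki
      · exact Or.inl ⟨(hr k i hki).1, hi⟩
      · exact Or.inr ⟨i, hki, rfl⟩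
    · refine ⟨y.2, Set.finite_empty.subset ?_⟩
      rintro _ ⟨⟨i, hi, rfl⟩, hi2⟩
      exact hex ⟨i, hi, hi2⟩

lemma rosenthal_indep {S : Type*} (E : Bool → ℕ → Set S) (M : Set ℕ) (hM : M.Infinite)
    (hNC : RNC E Set.univ M) :
    ∃ n : ℕ → ℕ, StrictMono n ∧ ∀ (σ : ℕ → Bool) (K : ℕ), ∃ φ, ∀ k < K, φ ∈ E (σ k) (n k) := by
  let P : Set (Set S) × Set ℕ × ℕ → Prop := fun s => s.1.Finite ∧ s.2.1.Infinite ∧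
    (∀ n ∈ s.2.1, s.2.2 < n) ∧ ∀ D ∈ s.1, RNC E D s.2.1
  let r : Set (Set S) × Set ℕ × ℕ → Set (Set S) × Set ℕ × ℕ → Prop := fun s t =>
    t.2.2 ∈ s.2.1 ∧ ∀ D ∈ s.1, ∀ b, D ∩ E b t.2.2 ∈ t.1
  obtain ⟨f, hf0, hf⟩ := exists_seq_aux P r ({Set.univ}, M ∩ Set.Ioi 0, 0)
    ⟨Set.finite_singleton _, inf_inter_Ioi hM 0, fun n hn => hn.2, by
      rintro D rfl N hN
      exact hNC N (hN.trans Set.inter_subset_left)⟩ (by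
      rintro ⟨F, M, j⟩ ⟨hF, hM, hj, hN⟩
      obtain ⟨j', hj', N, hNM, hNi, hlt, hC⟩ := rosenthal_step E F hF M hM hN
      refine ⟨((fun p : Set S × Bool => p.1 ∩ E p.2 j') '' (F ×ˢ Set.univ), N, j'),
        ⟨(hF.prod Set.finite_univ).image _, hNi, hlt, ?_⟩, hj', ?_⟩
      · rintro _ ⟨⟨D, b⟩, ⟨hD, -⟩, rfl⟩
        exact hC D hD b
      · intro D hD b
        exact ⟨(D, b), ⟨hD, trivial⟩, rfl⟩)
  refine ⟨fun k => (f (k+1)).2.2, strictMono_nat_of_lt_succ fun k =>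
    (hf (k+1)).1.2.2.1 _ (hf (k+1)).2.1, ?_⟩
  intro σ K
  have hcell : ∀ K, {φ | ∀ k < K, φ ∈ E (σ k) (f (k+1)).2.2} ∈ (f K).1 := by
    intro K
    induction K with
    | zero => rw [hf0]; simp
    | succ K ih =>
      have := (hf K).2.2 _ ih (σ K)
      convert this using 1
      ext φ
      simp only [Set.mem_ofPred_eq, Set.mem_inter_iff]
      constructor
      · intro h
        exact ⟨fun k hk => h k (by omega), h K (by omega)⟩
      · rintro ⟨h1, h2⟩ k hk
        rcases Nat.lt_succ_iff_lt_or_eq.1 hk with h | rfl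
        · exact h1 k h
        · exact h2
  by_contra hne
  refine (hf K).1.2.2.2 _ (hcell K) _ subset_rfl (hf K).1.2.1 ?_
  intro φ hφ
  exact absurd ⟨φ, hφ⟩ hne

lemma exists_pair_RNC {S ι : Type*} (E : ι → Bool → ℕ → Set S) (I : Finset ι)
    (h : ∀ M : Set ℕ, M.Infinite → ∃ i ∈ I, ∃ φ, ∀ b, {n | n ∈ M ∧ φ ∈ E i b n}.Infinite) :
    ∃ i ∈ I, ∃ M : Set ℕ, M.Infinite ∧ RNC (E i) Set.univ M := by
  classical
  by_contra hcon
  have hcon' : ∀ i ∈ I, ∀ M : Set ℕ, M.Infinite →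
      ∃ N ⊆ M, N.Infinite ∧ RConv (E i) Set.univ N := by
    intro i hi M hM
    by_contra hc
    exact hcon ⟨i, hi, M, hM, fun N hN hNi hC => hc ⟨N, hN, hNi, hC⟩⟩
  have hall : ∀ J : Finset ι, J ⊆ I → ∃ M : Set ℕ, M.Infinite ∧
      ∀ i ∈ J, RConv (E i) Set.univ M := by
    intro J
    induction J using Finset.induction_on with
    | empty => intro _; exact ⟨Set.univ, Set.infinite_univ, by simp⟩
    | insert i J _ ih =>
      intro hJ
      obtain ⟨M, hM, hMJ⟩ := ih ((Finset.subset_insert _ _).trans hJ)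
      obtain ⟨N, hN, hNi, hC⟩ := hcon' i (hJ (Finset.mem_insert_self _ _)) M hM
      refine ⟨N, hNi, ?_⟩
      intro i' hi'
      rcases Finset.mem_insert.1 hi' with rfl | hi'
      · exact hC
      · intro φ hφ
        obtain ⟨b, hb⟩ := hMJ i' hi' φ hφ
        exact ⟨b, hb.subset fun n hn => ⟨hN hn.1, hn.2⟩⟩
  obtain ⟨M, hM, hMI⟩ := hall I subset_rfl
  obtain ⟨i, hi, φ, hφ⟩ := h M hM
  obtain ⟨b, hb⟩ := hMI i hi φ trivial
  exact hφ b hb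
lemma caSeqR_bdd {t : ℕ → ℝ} {C : ℝ} (hC : ∀ n, |t n| ≤ C) (n : ℕ) :
    BddAbove {u | ∃ k, n ≤ k ∧ ∃ l, n ≤ l ∧ u = |t k - t l|} := by
  refine ⟨2 * C, ?_⟩
  rintro _ ⟨k, -, l, -, rfl⟩
  have := abs_sub (t k) (t l)
  linarith [hC k, hC l]

lemma caSeqR_bddBelow (t : ℕ → ℝ) :
    BddBelow {s | ∃ n : ℕ, s = sSup {u | ∃ k, n ≤ k ∧ ∃ l, n ≤ l ∧ u = |t k - t l|}} := by
  refine ⟨0, ?_⟩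
  rintro _ ⟨n, rfl⟩
  apply Real.sSup_nonneg
  rintro _ ⟨k, -, l, -, rfl⟩
  exact abs_nonneg _

lemma exists_of_lt_caSeqR {t : ℕ → ℝ} {β : ℝ} (h : β < caSeqR t) (n : ℕ) :
    ∃ k, n ≤ k ∧ ∃ l, n ≤ l ∧ β < |t k - t l| := by
  have h1 := lt_of_lt_of_le h (csInf_le (caSeqR_bddBelow t) ⟨n, rfl⟩)
  obtain ⟨_, ⟨k, hk, l, hl, rfl⟩, h2⟩ := exists_lt_of_lt_csSup (by exact ⟨_, n, le_rfl, n, le_rfl, rfl⟩) h1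
  exact ⟨k, hk, l, hl, h2⟩

lemma le_caSeqR {t : ℕ → ℝ} {C β : ℝ} (hC : ∀ n, |t n| ≤ C)
    (h : ∀ n, ∃ k, n ≤ k ∧ ∃ l, n ≤ l ∧ β ≤ |t k - t l|) : β ≤ caSeqR t := by
  refine le_csInf ⟨_, 0, rfl⟩ ?_
  rintro _ ⟨n, rfl⟩
  obtain ⟨k, hk, l, hl, h2⟩ := h n
  exact h2.trans (le_csSup (caSeqR_bdd hC n) ⟨k, hk, l, hl, rfl⟩)

lemma caSeqR_le {t : ℕ → ℝ} {C : ℝ} (hC : ∀ n, |t n| ≤ C) : caSeqR t ≤ 2 * C := by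
  by_contra h
  obtain ⟨k, -, l, -, h⟩ := exists_of_lt_caSeqR (not_le.1 h) 0
  have := abs_sub (t k) (t l)
  linarith [hC k, hC l]

section
variable {X : Type*} [NormedAddCommGroup X] [NormedSpace ℝ X]

lemma phi_bdd {φ : X →L[ℝ] ℝ} (hφ : ‖φ‖ ≤ 1) {y : X} {C : ℝ} (hy : ‖y‖ ≤ C) : |φ y| ≤ C := by
  rw [← Real.norm_eq_abs]
  calc ‖φ y‖ ≤ ‖φ‖ * ‖y‖ := φ.le_opNorm y
    _ ≤ 1 * ‖y‖ := by gcongr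
    _ ≤ C := by linarith

lemma caSeqR_le_deSeq {x : ℕ → X} {C : ℝ} (hC : ∀ n, ‖x n‖ ≤ C) {φ : X →L[ℝ] ℝ}
    (hφ : ‖φ‖ ≤ 1) : caSeqR (fun n => φ (x n)) ≤ deSeq x := by
  refine le_csSup ⟨2 * C, ?_⟩ ⟨φ, hφ, rfl⟩
  rintro _ ⟨ψ, hψ, rfl⟩
  exact caSeqR_le fun n => phi_bdd hψ (hC n)

lemma exists_of_lt_deSeq {x : ℕ → X} {β : ℝ} (h : β < deSeq x) :
    ∃ φ : X →L[ℝ] ℝ, ‖φ‖ ≤ 1 ∧ β < caSeqR (fun n => φ (x n)) := by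
  obtain ⟨_, ⟨φ, hφ, rfl⟩, h⟩ := exists_lt_of_lt_csSup (by exact ⟨_, 0, by simp, rfl⟩) h
  exact ⟨φ, hφ, h⟩

lemma deSeq_nonneg {x : ℕ → X} {C : ℝ} (hC : ∀ n, ‖x n‖ ≤ C) : 0 ≤ deSeq x := by
  refine le_trans ?_ (caSeqR_le_deSeq hC (φ := 0) (by simp))
  refine le_caSeqR (C := 0) (by simp) fun n => ⟨n, le_rfl, n, le_rfl, by simp⟩


lemma caSeq_bddBelow (x : ℕ → X) : BddBelow {s | ∃ n : ℕ, s = Metric.diam (x '' Set.Ici n)} := by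
  refine ⟨0, ?_⟩
  rintro _ ⟨n, rfl⟩
  exact Metric.diam_nonneg


lemma caSeq_nonneg (x : ℕ → X) : 0 ≤ caSeq x := by
  refine le_csInf ⟨_, 0, rfl⟩ ?_
  rintro _ ⟨n, rfl⟩
  exact Metric.diam_nonneg


lemma wcaSeq_le (x : ℕ → X) {n : ℕ → ℕ} (hn : StrictMono n) : wcaSeq x ≤ caSeq (x ∘ n) := by
  refine csInf_le ⟨0, ?_⟩ ⟨n, hn, rfl⟩
  rintro _ ⟨n, -, rfl⟩
  exact caSeq_nonneg _


lemma caSeq_le {x : ℕ → X} {α : ℝ} (hα : 0 ≤ α) (h : ∀ m n, m < n → ‖x m - x n‖ ≤ α) :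
    caSeq x ≤ α := by
  refine (csInf_le (caSeq_bddBelow x) ⟨0, rfl⟩).trans ?_
  refine Metric.diam_le_of_forall_dist_le hα ?_
  rintro _ ⟨m, -, rfl⟩ _ ⟨n, -, rfl⟩
  rcases lt_trichotomy m n with h1 | rfl | h1
  · rw [dist_eq_norm]; exact h m n h1
  · simpa using hα
  · rw [dist_comm, dist_eq_norm]; exact h n m h1


lemma le_wcaSeq {x : ℕ → X} {C δ : ℝ} (hC : ∀ n, ‖x n‖ ≤ C)
    (h : ∀ m n, m ≠ n → δ ≤ ‖x m - x n‖) : δ ≤ wcaSeq x := by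
  refine le_csInf ⟨_, id, strictMono_id, rfl⟩ ?_
  rintro _ ⟨n, hn, rfl⟩
  refine le_csInf ⟨_, 0, rfl⟩ ?_
  rintro _ ⟨k, rfl⟩
  refine (h (n k) (n (k+1)) (hn (Nat.lt_succ_self k)).ne).trans ?_
  rw [← dist_eq_norm]
  refine Metric.dist_le_diam_of_mem ?_ ⟨k, Set.mem_Ici.2 le_rfl, rfl⟩ ⟨k+1, Set.mem_Ici.2 (by omega), rfl⟩
  refine (Metric.isBounded_closedBall (x := (0:X)) (r := C)).subset ?_
  rintro _ ⟨i, -, rfl⟩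
  simpa using hC _

lemma exists_sign_functional {y : ℕ → X} {β : ℝ} (hβ : 0 < β)
    (h : ∀ (N : ℕ) (a : ℕ → ℝ), β * ∑ k ∈ Finset.range N, |a k| ≤
      ‖∑ k ∈ Finset.range N, a k • y k‖) :
    ∃ φ : X →L[ℝ] ℝ, ‖φ‖ ≤ 1 ∧ ∀ k, φ (y k) = (-1)^k * β := by
  have hfs : ∀ a : ℕ →₀ ℝ, β * a.sum (fun _ t => |t|) ≤ ‖Finsupp.linearCombination ℝ y a‖ := by
    intro a
    obtain ⟨N, hN⟩ := a.support.exists_nat_subset_range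
    rw [Finsupp.linearCombination_apply, Finsupp.sum_of_support_subset a hN _ (by simp),
      Finsupp.sum_of_support_subset a hN _ (by simp)]
    exact h N a
  have hli : LinearIndependent ℝ y := by
    rw [linearIndependent_iff]
    intro a ha
    have h1 := hfs a
    rw [ha, norm_zero] at h1
    have h2 : a.sum (fun _ t => |t|) ≤ 0 := by
      by_contra hc
      have := mul_pos hβ (not_le.1 hc)
      linarith
    have h3 : ∑ i ∈ a.support, |a i| = 0 :=
      le_antisymm h2 (Finset.sum_nonneg fun _ _ => abs_nonneg _)
    rw [Finset.sum_eq_zero_iff_of_nonneg (fun _ _ => abs_nonneg _)] at h3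
    ext i
    by_contra hi
    exact hi (abs_eq_zero.1 (h3 i (Finsupp.mem_support_iff.2 hi)))
  let f : Submodule.span ℝ (Set.range y) →ₗ[ℝ] ℝ :=
    (Finsupp.linearCombination ℝ (fun k : ℕ => (-1:ℝ)^k * β)).comp hli.repr
  have hfb : ∀ v, ‖f v‖ ≤ 1 * ‖v‖ := by
    intro v
    have h1 := hfs (hli.repr v)
    rw [hli.linearCombination_repr] at h1
    have h2 : ‖f v‖ ≤ β * (hli.repr v).sum (fun _ t => |t|) := by
      change ‖Finsupp.linearCombination ℝ _ (hli.repr v)‖ ≤ _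
      rw [Finsupp.linearCombination_apply, Finsupp.sum, Finsupp.sum, Finset.mul_sum]
      refine (norm_sum_le _ _).trans (Finset.sum_le_sum fun i _ => ?_)
      simp [abs_of_pos hβ, mul_comm]
    rw [one_mul]
    exact h2.trans h1
  obtain ⟨g, hg1, hg2⟩ := exists_extension_norm_eq _ (f.mkContinuous 1 hfb)
  refine ⟨g, hg2.trans_le (f.mkContinuous_norm_le zero_le_one hfb), fun k => ?_⟩
  have hk : y k ∈ Submodule.span ℝ (Set.range y) := Submodule.subset_span ⟨k, rfl⟩
  have := hg1 ⟨y k, hk⟩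
  rw [this]
  change Finsupp.linearCombination ℝ _ (hli.repr ⟨y k, hk⟩) = _
  rw [hli.repr_eq_single k _ rfl]
  simp

lemma exists_sep_subseq {x : ℕ → X} {C α : ℝ} (hC : ∀ n, ‖x n‖ ≤ C) (hα : 0 < α)
    (h : α < wcaSeq x) :
    ∃ r : ℝ, ∀ τ > 0, ∃ n : ℕ → ℕ, StrictMono n ∧ (∀ k, |‖x (n k)‖ - r| ≤ τ) ∧
      ∀ k l, k ≠ l → α ≤ ‖x (n k) - x (n l)‖ := by
  let U : Ultrafilter ℕ := hyperfilter ℕ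
  have hU : ∀ m : ℕ, ∀ᶠ n in (U : Filter ℕ), m < n := fun m => by
    have := Filter.eventually_gt_atTop m
    rw [← Nat.cofinite_eq_atTop] at this
    exact hyperfilter_le_cofinite this
  obtain ⟨r, -, hr⟩ := (isCompact_Icc (a := (0:ℝ)) (b := C)).ultrafilter_le_nhds
    (U.map fun n => ‖x n‖) (by
      rw [le_principal_iff]
      exact Filter.Eventually.of_forall (f := (U : Filter ℕ)) fun n => ⟨norm_nonneg _, hC n⟩)
  refine ⟨r, fun τ hτ => ?_⟩
  have hrτ : ∀ᶠ n in (U : Filter ℕ), |‖x n‖ - r| ≤ τ := by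
    have : Tendsto (fun n => ‖x n‖) (U : Filter ℕ) (nhds r) := hr
    filter_upwards [this.eventually (Metric.closedBall_mem_nhds r hτ)] with n hn
    simpa [Real.dist_eq] using hn
  have hsub : ∀ (P : ℕ → Prop) (R : ℕ → ℕ → Prop), (∀ᶠ n in (U : Filter ℕ), P n) →
      (∀ n, P n → ∀ᶠ m in (U : Filter ℕ), R n m) → ∃ f : ℕ → ℕ, StrictMono f ∧ (∀ n, P (f n)) ∧
        ∀ m n, m < n → R (f m) (f n) := by
    intro P R hP hR
    obtain ⟨f, hf1, hf2⟩ := exists_seq_of_forall_finset_exists P (fun a b => a < b ∧ R a b) (by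
      intro s hs
      have h1 : ∀ᶠ m in (U : Filter ℕ), ∀ a ∈ s, a < m ∧ R a m := by
        rw [Filter.eventually_all_finset]
        intro a ha
        exact (hU a).and (hR a (hs a ha))
      exact (hP.and h1).exists)
    exact ⟨f, fun m n hmn => (hf2 m n hmn).1, hf1, fun m n hmn => (hf2 m n hmn).2⟩
  by_cases hcase : ∀ᶠ n in (U : Filter ℕ), ∀ᶠ m in (U : Filter ℕ), α ≤ ‖x n - x m‖
  · obtain ⟨f, hf, hfP, hfR⟩ := hsub (fun n => |‖x n‖ - r| ≤ τ ∧
      ∀ᶠ m in (U : Filter ℕ), α ≤ ‖x n - x m‖) (fun n m => α ≤ ‖x n - x m‖)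
      (hrτ.and hcase) (fun n hn => hn.2)
    refine ⟨f, hf, fun k => (hfP k).1, fun k l hkl => ?_⟩
    rcases lt_or_gt_of_ne hkl with h1 | h1
    · exact hfR k l h1
    · rw [norm_sub_rev]; exact hfR l k h1
  · exfalso
    rw [← Ultrafilter.eventually_not] at hcase
    obtain ⟨f, hf, -, hfR⟩ := hsub _ (fun n m => ¬ α ≤ ‖x n - x m‖) hcase
      (fun n hn => Ultrafilter.eventually_not.2 hn)
    have h1 := wcaSeq_le x hf
    have h2 := caSeq_le (x := x ∘ f) hα.le (fun m n hmn => (not_le.1 (hfR m n hmn)).le)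
    linarith

lemma wca_le_of_schur {c : ℝ} (hc : 1 ≤ c) (hX : HasCStrongSchur X c) (x : ℕ → X) {C : ℝ}
    (hC : ∀ n, ‖x n‖ ≤ C) : wcaSeq x ≤ c * deSeq x := by
  have hc0 : 0 < c := by linarith
  refine le_of_forall_lt fun α hα => ?_
  by_contra hcon
  push Not at hcon
  obtain ⟨β, hβ1, hβ2⟩ := exists_between hα
  obtain ⟨α', hα1', hα2'⟩ := exists_between hβ2
  have hα0 : 0 ≤ α := le_trans (mul_nonneg hc0.le (deSeq_nonneg hC)) hcon
  have hβ0 : 0 < β := by linarith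
  have hα'0 : 0 < α' := by linarith
  obtain ⟨r, hr⟩ := exists_sep_subseq hC hα'0 hα2'
  have hr0 : 0 < r := by
    obtain ⟨n, hn, hn1, hn2⟩ := hr (α' / 4) (by linarith)
    have h1 := hn2 0 1 (by norm_num)
    have h2 := norm_sub_le (x (n 0)) (x (n 1))
    have h3 := abs_le.1 (hn1 0)
    have h4 := abs_le.1 (hn1 1)
    linarith
  set τ := (α' - β) * r / (α' + 3 * r) with hτdef
  have hden : 0 < α' + 3 * r := by positivity
  have hτ : τ * (α' + 3 * r) = (α' - β) * r := by rw [hτdef]; field_simp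
  have hτ0 : 0 < τ := div_pos (mul_pos (by linarith) hr0) hden
  have h3τ : 3 * τ < α' := by
    have : 3 * τ * r < α' * r := by nlinarith
    exact lt_of_mul_lt_mul_right this hr0.le
  have hτr : τ < r := by
    have : τ * α' < r * α' := by nlinarith
    exact lt_of_mul_lt_mul_right this hα'0.le
  obtain ⟨n, hn, hn1, hn2⟩ := hr τ hτ0
  have hnpos : ∀ k, 0 < ‖x (n k)‖ := fun k => by linarith [(abs_le.1 (hn1 k)).1]
  let y : ℕ → X := fun k => ‖x (n k)‖⁻¹ • x (n k)
  have hy1 : ∀ k, ‖y k‖ = 1 := fun k => by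
    simp only [y, norm_smul, norm_inv, norm_norm]
    exact inv_mul_cancel₀ (hnpos k).ne'
  have hyx : ∀ k, ‖x (n k)‖ • y k = x (n k) := fun k => by
    simp only [y, smul_smul]
    rw [mul_inv_cancel₀ (hnpos k).ne', one_smul]
  have hya : ∀ k, ‖r • y k - x (n k)‖ ≤ τ := fun k => by
    rw [← hyx k, ← sub_smul, norm_smul, hy1, mul_one, Real.norm_eq_abs, abs_sub_comm]
    exact hn1 k
  set δ := (α' - 2 * τ) / r with hδ
  have hδ0 : 0 < δ := div_pos (by linarith) hr0
  have hsep : ∀ k l, k ≠ l → δ ≤ ‖y k - y l‖ := by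
    intro k l hkl
    rw [hδ, div_le_iff₀ hr0]
    have h1 := hn2 k l hkl
    have h2 : ‖y k - y l‖ * r = ‖r • y k - r • y l‖ := by
      rw [← smul_sub, norm_smul, Real.norm_eq_abs, abs_of_pos hr0, mul_comm]
    have h3 : x (n k) - x (n l) = (r • y k - r • y l) - (r • y k - x (n k))
      + (r • y l - x (n l)) := by abel
    have h4 := norm_add_le ((r • y k - r • y l) - (r • y k - x (n k))) (r • y l - x (n l))
    have h5 := norm_sub_le (r • y k - r • y l) (r • y k - x (n k))
    rw [← h3] at h4
    linarith [hya k, hya l]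
  have hδ2 : δ ≤ 2 := by
    refine (hsep 0 1 (by norm_num)).trans ((norm_sub_le _ _).trans ?_)
    rw [hy1, hy1]; norm_num
  set δ' := (α' - 3 * τ) / r with hδ'
  have hδ'0 : 0 < δ' := div_pos (by linarith) hr0
  have hδδ : δ' < δ := by rw [hδ, hδ']; gcongr; linarith
  have hε : 0 < 2 * c / δ' - 2 * c / δ := sub_pos.2 (by gcongr)
  obtain ⟨m, hm, hm1⟩ := hX δ hδ0 hδ2 _ hε y hy1 hsep
  have hlow : ∀ (N : ℕ) (a : ℕ → ℝ), β / (2 * c) * ∑ k ∈ Finset.range N, |a k| ≤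
      ‖∑ k ∈ Finset.range N, a k • x (n (m k))‖ := by
    intro N a
    have h1 := hm1 N (fun k => a k * ‖x (n (m k))‖)
    have h2 : ∀ k, (a k * ‖x (n (m k))‖) • y (m k) = a k • x (n (m k)) := fun k => by
      rw [mul_smul, hyx]
    simp only [h2] at h1
    refine le_trans ?_ h1
    have h3 : (2 * c / δ + (2 * c / δ' - 2 * c / δ))⁻¹ = δ' / (2 * c) := by
      rw [add_sub_cancel, inv_div]
    rw [h3, Finset.mul_sum, Finset.mul_sum]
    refine Finset.sum_le_sum fun k _ => ?_
    rw [abs_mul, abs_norm]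
    have h4 : r - τ ≤ ‖x (n (m k))‖ := by linarith [(abs_le.1 (hn1 (m k))).1]
    have h5 : β ≤ δ' * (r - τ) := by
      rw [hδ', div_mul_eq_mul_div, le_div_iff₀ hr0]
      nlinarith
    have h6 : β ≤ δ' * ‖x (n (m k))‖ := h5.trans (by gcongr)
    calc β / (2 * c) * |a k| ≤ (δ' * ‖x (n (m k))‖) / (2 * c) * |a k| := by gcongr
      _ = _ := by ring
  obtain ⟨φ, hφ, hφk⟩ := exists_sign_functional (by positivity) hlow
  have hca : β / c ≤ caSeqR fun n => φ (x n) := by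
    refine le_caSeqR (fun k => phi_bdd hφ (hC k)) fun N => ?_
    have hs := hn.comp hm
    refine ⟨n (m (2 * N)), le_trans (by simp only [id]; omega) (hs.id_le (2 * N)), n (m (2 * N + 1)),
      le_trans (by simp only [id]; omega) (hs.id_le (2 * N + 1)), ?_⟩
    rw [hφk, hφk, pow_succ, pow_mul]
    refine le_trans (le_of_eq ?_) (le_abs_self _)
    norm_num
    field_simp
    norm_num
  have h1 := hca.trans (caSeqR_le_deSeq hC hφ)
  rw [div_le_iff₀ hc0] at h1
  linarith

lemma schur_of_wca_le {c : ℝ} (hc : 1 ≤ c)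
    (h : ∀ x : ℕ → X, (∃ C : ℝ, ∀ n, ‖x n‖ ≤ C) → wcaSeq x ≤ c * deSeq x) :
    HasCStrongSchur X c := by
  have hc0 : 0 < c := by linarith
  intro δ hδ hδ2 ε hε x hx1 hsep
  set κ := (2 * c / δ + ε)⁻¹ with hκ
  have hκlt : 2 * κ < δ / c := by
    have : κ < (2 * c / δ)⁻¹ := by
      rw [hκ]
      apply inv_strictAnti₀ (by positivity)
      linarith
    rw [inv_div] at this
    have h2 : δ / c = 2 * (δ / (2 * c)) := by field_simp
    linarith
  obtain ⟨β, hβ1, hβ2⟩ := exists_between hκlt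
  set η := β - 2 * κ with hη
  have hη0 : 0 < η := by linarith
  obtain ⟨K, hK⟩ := exists_nat_gt (2 / η)
  let ρ : ℕ → ℝ := fun i => -1 + (i + 1) * η
  let S := {φ : X →L[ℝ] ℝ // ‖φ‖ ≤ 1}
  let E : ℕ → Bool → ℕ → Set S := fun i b n =>
    if b then {φ | ρ i + 2 * κ < φ.1 (x n)} else {φ | φ.1 (x n) < ρ i}
  have hosc : ∀ M : Set ℕ, M.Infinite → ∃ i ∈ Finset.range K, ∃ φ, ∀ b,
      {n | n ∈ M ∧ φ ∈ E i b n}.Infinite := by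
    intro M hM
    obtain ⟨e, he, heM⟩ : ∃ e : ℕ → ℕ, StrictMono e ∧ ∀ k, e k ∈ M :=
      ⟨Nat.nth (· ∈ M), Nat.nth_strictMono hM, Nat.nth_mem_of_infinite hM⟩
    have h1 := le_wcaSeq (x := x ∘ e) (C := 1) (δ := δ) (fun n => (hx1 _).le)
      (fun m n hmn => hsep _ _ (he.injective.ne hmn))
    have h2 := h (x ∘ e) ⟨1, fun n => (hx1 _).le⟩
    have h3 : β < deSeq (x ∘ e) := by
      rw [lt_div_iff₀ hc0] at hβ2
      have : c * β < c * deSeq (x ∘ e) := by linarith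
      exact lt_of_mul_lt_mul_left this hc0.le
    obtain ⟨φ, hφ, hca⟩ := exists_of_lt_deSeq h3
    have h4 : ∀ n, ∃ i, i < K ∧ ∃ k, n ≤ k ∧ ∃ l, n ≤ l ∧
        ρ i + 2 * κ < φ (x (e k)) ∧ φ (x (e l)) < ρ i := by
      intro n
      have h5 : ∃ k, n ≤ k ∧ ∃ l, n ≤ l ∧ β < φ (x (e k)) - φ (x (e l)) := by
        obtain ⟨k, hk, l, hl, hkl⟩ := exists_of_lt_caSeqR hca n
        rcases lt_abs.1 hkl with h6 | h6
        · exact ⟨k, hk, l, hl, h6⟩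
        · exact ⟨l, hl, k, hk, by simpa using h6⟩
      obtain ⟨k, hk, l, hl, hkl⟩ := h5
      have h7 := abs_le.1 (phi_bdd hφ (hx1 (e l)).le)
      have h8 := abs_le.1 (phi_bdd hφ (hx1 (e k)).le)
      have h9 : 0 ≤ (φ (x (e l)) + 1) / η := div_nonneg (by linarith) hη0.le
      have hf1 := Nat.floor_le h9
      have hf2 := Nat.lt_floor_add_one ((φ (x (e l)) + 1) / η)
      rw [le_div_iff₀ hη0] at hf1
      rw [div_lt_iff₀ hη0] at hf2
      refine ⟨⌊(φ (x (e l)) + 1) / η⌋₊, ?_, k, hk, l, hl, ?_, ?_⟩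
      · rw [Nat.floor_lt h9]
        refine lt_of_le_of_lt ?_ hK
        gcongr
        linarith
      · simp only [ρ]; linarith
      · simp only [ρ]; linarith
    have h5 : ∃ i, i < K ∧ ∀ n, ∃ k, n ≤ k ∧ ∃ l, n ≤ l ∧
        ρ i + 2 * κ < φ (x (e k)) ∧ φ (x (e l)) < ρ i := by
      by_contra hcon
      have h6 : ∀ i, ∃ n, i < K → ¬ ∃ k, n ≤ k ∧ ∃ l, n ≤ l ∧
        ρ i + 2 * κ < φ (x (e k)) ∧ φ (x (e l)) < ρ i := by
        intro i
        by_contra hc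
        apply hcon
        refine ⟨i, ?_, fun n => ?_⟩
        · by_contra hi
          exact hc ⟨0, fun h => absurd h hi⟩
        · by_contra hn
          exact hc ⟨n, fun _ => hn⟩
      choose n hn using h6
      obtain ⟨i, hi, k, hk, l, hl, hh⟩ := h4 ((Finset.range K).sup n)
      have : n i ≤ (Finset.range K).sup n := Finset.le_sup (Finset.mem_range.2 hi)
      exact hn i hi ⟨k, this.trans hk, l, this.trans hl, hh⟩
    obtain ⟨i, hi, h6⟩ := h5
    refine ⟨i, Finset.mem_range.2 hi, ⟨φ, hφ⟩, fun b => ?_⟩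
    rw [← Nat.frequently_atTop_iff_infinite, Filter.frequently_atTop]
    intro n
    obtain ⟨k, hk, l, hl, h7, h8⟩ := h6 n
    cases b
    · exact ⟨e l, hl.trans (he.id_le l), heM l, by simpa [E] using h8⟩
    · exact ⟨e k, hk.trans (he.id_le k), heM k, by simpa [E] using h7⟩
  obtain ⟨i, -, M, hM, hNC⟩ := exists_pair_RNC E (Finset.range K) hosc
  obtain ⟨n, hn, hind⟩ := rosenthal_indep (E i) M hM hNC
  refine ⟨n, hn, fun N a => ?_⟩
  obtain ⟨φ, hφ⟩ := hind (fun k => decide (0 ≤ a k)) N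
  obtain ⟨ψ, hψ⟩ := hind (fun k => !decide (0 ≤ a k)) N
  have hsum : 2 * κ * ∑ k ∈ Finset.range N, |a k| ≤
      (φ.1 - ψ.1) (∑ k ∈ Finset.range N, a k • x (n k)) := by
    rw [map_sum, Finset.mul_sum]
    refine Finset.sum_le_sum fun k hk => ?_
    have h1 := hφ k (Finset.mem_range.1 hk)
    have h2 := hψ k (Finset.mem_range.1 hk)
    rw [map_smul, smul_eq_mul]
    change _ ≤ a k * (φ.1 (x (n k)) - ψ.1 (x (n k)))
    by_cases hak : 0 ≤ a k
    · simp [E, hak] at h1 h2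
      rw [abs_of_nonneg hak]
      nlinarith
    · simp [E, hak] at h1 h2
      rw [abs_of_neg (not_le.1 hak)]
      nlinarith
  have hnorm : (φ.1 - ψ.1) (∑ k ∈ Finset.range N, a k • x (n k)) ≤
      2 * ‖∑ k ∈ Finset.range N, a k • x (n k)‖ := by
    refine (le_abs_self _).trans (((φ.1 - ψ.1).le_opNorm _).trans ?_)
    gcongr
    exact (norm_sub_le _ _).trans (by linarith [φ.2, ψ.2])
  linarith
end

/-- A real Banach space has the `c`-strong Schur property iff
`wca(x_n) ≤ c · de(x_n)` for every bounded sequence `(x_n)`. -/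
theorem hasCStrongSchur_iff_wca_le_de
    (X : Type*) [NormedAddCommGroup X] [NormedSpace ℝ X] [CompleteSpace X]
    (c : ℝ) (hc : 1 ≤ c) :
    HasCStrongSchur X c ↔
      ∀ x : ℕ → X, (∃ C : ℝ, ∀ n, ‖x n‖ ≤ C) → wcaSeq x ≤ c * deSeq x := by
  exact ⟨fun h x ⟨_, hC⟩ => wca_le_of_schur hc h x hC, schur_of_wca_le hc⟩
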